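/- For each k ≥ 2, over the alphabet {a, b} the language L_k = ⋃_{i=0}^{k−1} (a bⁱ)* b aⁱ is recognized by some sweeping reversible automaton (sRFA), but is not recognized by any one-way reversible automaton with multiple initial states (MRFA) having fewer than k initial states. -/

import Mathlib

open scoped Classical

/-- Run a partial transition function along a word. -/
def runP {A Q : Type} (d : A → Q → Option Q) (q : Q) (w : List A) : Option Q :=
  w.foldl (fun o a => o.bind (d a)) (some q)

/-- One-way reversible finite automaton (1RFA): a partial deterministic automaton
with a single initial state and injective transition functions. -/
structure RFA (A Q : Type) where
  start : Q
  next : A → Q → Option Q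
  inj : ∀ a q q' r, next a q = some r → next a q' = some r → q = q'
  accept : Set Q

def RFA.Language {A Q : Type} (M : RFA A Q) : Set (List A) :=
  {w | ∃ qf ∈ M.accept, runP M.next M.start w = some qf}

/-- A permutation automaton (1PerFA): every transition function is a totally
defined bijection. -/
def RFA.IsPerm {A Q : Type} (M : RFA A Q) : Prop :=
  (∀ a q, (M.next a q).isSome) ∧ ∀ a r, ∃ q, M.next a q = some r

/-- One-way reversible finite automaton with multiple initial states (MRFA). -/
structure MRFA (A Q : Type) where
  init : Set Q
  next : A → Q → Option Q
  inj : ∀ a q q' r, next a q = some r → next a q' = some r → q = q'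
  accept : Set Q

def MRFA.Language {A Q : Type} (M : MRFA A Q) : Set (List A) :=
  {w | ∃ q0 ∈ M.init, ∃ qf ∈ M.accept, runP M.next q0 w = some qf}

def Rec1RFA (A : Type) (L : Set (List A)) : Prop :=
  ∃ (Q : Type) (_ : Fintype Q) (M : RFA A Q), M.Language = L

def Rec1RFA1 (A : Type) (L : Set (List A)) : Prop :=
  ∃ (Q : Type) (_ : Fintype Q) (M : RFA A Q), M.accept.ncard = 1 ∧ M.Language = L

def Rec1PerFA (A : Type) (L : Set (List A)) : Prop :=
  ∃ (Q : Type) (_ : Fintype Q) (M : RFA A Q), M.IsPerm ∧ M.Language = L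

def Rec1PerFA1 (A : Type) (L : Set (List A)) : Prop :=
  ∃ (Q : Type) (_ : Fintype Q) (M : RFA A Q),
    M.IsPerm ∧ M.accept.ncard = 1 ∧ M.Language = L

def RecMRFA (A : Type) (L : Set (List A)) : Prop :=
  ∃ (Q : Type) (_ : Fintype Q) (M : MRFA A Q), M.Language = L

/-- Sweeping reversible automaton (sRFA), given without its accepting set:
states `Qp` move rightwards, states `Qm` move leftwards; `startT` is the
transition of the left end-marker function on the initial state, `turnL` its
restriction to `Qm`, and `turnR` is the transition function at the right
end-marker.  All transition functions are partial and injective, and the left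
end-marker function is injective on the whole of `{q₀} ∪ Q₋`. -/
structure SRFA (A Qp Qm : Type) where
  start : Qp
  nextP : A → Qp → Option Qp
  nextM : A → Qm → Option Qm
  startT : Option Qp
  turnL : Qm → Option Qp
  turnR : Qp → Option Qm
  injP : ∀ a q q' r, nextP a q = some r → nextP a q' = some r → q = q'
  injM : ∀ a q q' r, nextM a q = some r → nextM a q' = some r → q = q'
  injL : ∀ q q' r, turnL q = some r → turnL q' = some r → q = q'
  injR : ∀ q q' r, turnR q = some r → turnR q' = some r → q = q'
  startT_ne_turnL : ∀ q r, startT = some r → turnL q ≠ some r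

/-- One step of a sweeping automaton on input `⊢w⊣`: a configuration is a state
together with a head position in `{0, 1, …, |w| + 1}`, where position `0` is the
left end-marker, position `i` with `1 ≤ i ≤ |w|` carries the `i`-th input
symbol, and position `|w| + 1` is the right end-marker.  The result is `none`
when the corresponding transition is undefined and the computation halts. -/
noncomputable def SRFA.step {A Qp Qm : Type} (M : SRFA A Qp Qm) (w : List A) :
    (Qp ⊕ Qm) × ℕ → Option ((Qp ⊕ Qm) × ℕ)
  | (Sum.inl q, i) =>
      if i = 0 then
        if q = M.start then M.startT.map (fun p => (Sum.inl p, 1)) else none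
      else if i = w.length + 1 then
        (M.turnR q).map (fun r => (Sum.inr r, w.length))
      else
        (w[i - 1]?.bind (fun a => M.nextP a q)).map (fun p => (Sum.inl p, i + 1))
  | (Sum.inr q, i) =>
      if i = 0 then (M.turnL q).map (fun p => (Sum.inl p, 1))
      else if i = w.length + 1 then none
      else (w[i - 1]?.bind (fun a => M.nextM a q)).map (fun r => (Sum.inr r, i - 1))

/-- The configuration reached after `n` steps of the computation on `w`,
starting in the initial state at the left end-marker (or `none` if the
computation has halted before). -/
noncomputable def SRFA.steps {A Qp Qm : Type} (M : SRFA A Qp Qm) (w : List A) :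
    ℕ → Option ((Qp ⊕ Qm) × ℕ)
  | 0 => some (Sum.inl M.start, 0)
  | n + 1 => (M.steps w n).bind (M.step w)

/-- Acceptance of an ordinary sRFA: the computation halts at the right
end-marker in an accepting state `q ∈ F ⊆ Q₊`. -/
def SRFA.AcceptsR {A Qp Qm : Type} (M : SRFA A Qp Qm) (F : Set Qp) (w : List A) : Prop :=
  ∃ n q, M.steps w n = some (Sum.inl q, w.length + 1) ∧ q ∈ F ∧
    M.step w (Sum.inl q, w.length + 1) = none

def SRFA.LangR {A Qp Qm : Type} (M : SRFA A Qp Qm) (F : Set Qp) : Set (List A) :=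
  {w | M.AcceptsR F w}

/-- Acceptance of an sRFA with acceptance at both sides: the computation halts
at either end-marker in an accepting state `c ∈ F ⊆ Q₊ ∪ Q₋`. -/
def SRFA.AcceptsB {A Qp Qm : Type} (M : SRFA A Qp Qm) (F : Set (Qp ⊕ Qm)) (w : List A) : Prop :=
  ∃ n c i, M.steps w n = some (c, i) ∧ c ∈ F ∧ (i = 0 ∨ i = w.length + 1) ∧
    M.step w (c, i) = none

def SRFA.LangB {A Qp Qm : Type} (M : SRFA A Qp Qm) (F : Set (Qp ⊕ Qm)) : Set (List A) :=
  {w | M.AcceptsB F w}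

def RecSRFA (A : Type) (L : Set (List A)) : Prop :=
  ∃ (Qp Qm : Type) (_ : Fintype Qp) (_ : Fintype Qm) (M : SRFA A Qp Qm) (F : Set Qp),
    M.LangR F = L

/-- The string `a bⁱ`, with `a = false` and `b = true`. -/
def abWord (i : ℕ) : List Bool := false :: List.replicate i true

/-- The language `L_k = ⋃_{i=0}^{k-1} (a bⁱ)* b aⁱ`. -/
def LstarTail (k : ℕ) : Set (List Bool) :=
  {w | ∃ i < k, ∃ n : ℕ,
    w = (List.replicate n (abWord i)).flatten ++ true :: List.replicate i false}

/-!
A sweeping automaton can scan its input idly and then simulate a one-way reversible automaton on the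
way back, so it recognizes the reversal of every 1RFA language. The reversal `⋃ aⁱ b (bⁱ a)*` of
`L_k` is such a language: the prefix `aⁱ` selects a cycle of states that reads blocks `bⁱ a`. The
base state of this cycle is entered by `b` and closed by `a`, so no transition function merges two
states.

For the lower bound, every partial injection of a finite state set `Q` extends to a permutation of
`Q`, so a run of a reversible automaton on `u ^ |Sym Q|` can only return to the state in which it
started. Reading `(a bⁱ) ^ |Sym Q|` before `b aⁱ` therefore does not change the state, and two
indices `i ≠ j` sharing an initial state would make the automaton accept `(a bⁱ) ^ |Sym Q| b aʲ`.
-/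

/-! ### Runs of reversible automata -/

theorem exists_perm_extends {Q : Type*} [Finite Q] {f : Q → Option Q}
    (hf : ∀ q q' r, f q = some r → f q' = some r → q = q') :
    ∃ σ : Equiv.Perm Q, ∀ q r, f q = some r → σ q = r := by
  have := Fintype.ofFinite Q
  have hinj : Set.InjOn (fun q => (f q).getD q) {q | f q ≠ none} := by
    intro q hq q' hq' h
    obtain ⟨r, hr⟩ := Option.ne_none_iff_exists'.mp hq
    obtain ⟨r', hr'⟩ := Option.ne_none_iff_exists'.mp hq'
    simp only [hr, hr', Option.getD_some] at h
    exact hf q q' r hr (h ▸ hr')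
  obtain ⟨g, hg⟩ := Set.MapsTo.exists_equiv_extend_of_card_eq (t := Finset.univ)
    (by simp) (by simp [Set.MapsTo]) hinj
  refine ⟨g.trans (Equiv.subtypeUnivEquiv Finset.mem_univ), fun q r hqr => ?_⟩
  simpa [hqr] using hg q (by simp [hqr])

section Runs

variable {A Q : Type} (d : A → Q → Option Q)

theorem runP_eq_foldlM (q : Q) (w : List A) : runP d q w = w.foldlM (fun q a => d a q) q := by
  induction w using List.reverseRecOn with
  | nil => rfl
  | append_singleton w a ih =>
    simp only [runP, List.foldl_append, List.foldl_cons, List.foldl_nil, List.foldlM_append,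
      List.foldlM_cons, List.foldlM_nil] at ih ⊢
    simp [ih]

theorem runP_append (q : Q) (u v : List A) :
    runP d q (u ++ v) = (runP d q u).bind fun r => runP d r v := by
  simp only [runP_eq_foldlM, List.foldlM_append, Option.bind_eq_bind]

variable {d}

theorem pow_apply_eq_of_runP_flatten_replicate {u : List A} {σ : Equiv.Perm Q}
    (hσ : ∀ q r, runP d q u = some r → σ q = r) (n : ℕ) {q r : Q}
    (h : runP d q (List.replicate n u).flatten = some r) : (σ ^ n) q = r := by
  induction n generalizing q with
  | zero => simpa [runP] using h
  | succ n ih =>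
    rw [List.replicate_succ, List.flatten_cons, runP_append, Option.bind_eq_some_iff] at h
    obtain ⟨s, hqs, hsr⟩ := h
    rw [pow_succ, Equiv.Perm.mul_apply, hσ q s hqs, ih hsr]

end Runs

theorem exists_perm_extends_runP {A Q : Type} [Finite Q] {d : A → Q → Option Q}
    (hd : ∀ a q q' r, d a q = some r → d a q' = some r → q = q') (w : List A) :
    ∃ σ : Equiv.Perm Q, ∀ q r, runP d q w = some r → σ q = r := by
  induction w using List.reverseRecOn with
  | nil => exact ⟨1, by simp [runP]⟩
  | append_singleton w a ih =>
    obtain ⟨σ, hσ⟩ := ih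
    obtain ⟨τ, hτ⟩ := exists_perm_extends (hd a)
    refine ⟨τ * σ, fun q r h => ?_⟩
    rw [runP_append, Option.bind_eq_some_iff] at h
    obtain ⟨s, hqs, hsr⟩ := h
    rw [Equiv.Perm.mul_apply, hσ q s hqs, hτ s r hsr]

theorem eq_of_runP_flatten_replicate_card_perm {A Q : Type} [Finite Q] {d : A → Q → Option Q}
    (hd : ∀ a q q' r, d a q = some r → d a q' = some r → q = q') {u : List A} {q r : Q}
    (h : runP d q (List.replicate (Nat.card (Equiv.Perm Q)) u).flatten = some r) : q = r := by
  obtain ⟨σ, hσ⟩ := exists_perm_extends_runP hd u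
  simpa [pow_card_eq_one'] using pow_apply_eq_of_runP_flatten_replicate hσ _ h

/-! ### Initial states of reversible automata -/

theorem MRFA.natCard_le_ncard_init {A Q : Type} [Finite Q] (M : MRFA A Q) {ι : Type*}
    (u v : ι → List A)
    (mem : ∀ i n, (List.replicate n (u i)).flatten ++ v i ∈ M.Language)
    (eq_of_mem : ∀ i j n, n ≠ 0 → (List.replicate n (u i)).flatten ++ v j ∈ M.Language → i = j) :
    Nat.card ι ≤ M.init.ncard := by
  set N := Nat.card (Equiv.Perm Q)
  have hloop : ∀ i, ∃ q : M.init, runP M.next q (List.replicate N (u i)).flatten = some ↑q ∧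
      ∃ qf ∈ M.accept, runP M.next q (v i) = some qf := by
    intro i
    obtain ⟨q, hq, qf, hqf, hrun⟩ := mem i N
    rw [runP_append, Option.bind_eq_some_iff] at hrun
    obtain ⟨r, hqr, hrun⟩ := hrun
    obtain rfl := eq_of_runP_flatten_replicate_card_perm M.inj hqr
    exact ⟨⟨q, hq⟩, hqr, qf, hqf, hrun⟩
  choose q hq qf hqf hrun using hloop
  have hinj : Function.Injective q := by
    intro i j hij
    refine eq_of_mem i j N Nat.card_pos.ne' ⟨q i, (q i).2, qf j, hqf j, ?_⟩
    rw [runP_append, hq, Option.bind_some, hij, hrun]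
  exact Nat.card_le_card_of_injective q hinj

/-! ### Sweeping automata for reversals of one-way reversible languages -/

namespace SRFA

variable {A Qp Qm : Type}

/-- The configurations `(c, i)`, a state and a head position, that occur in the computation of a
sweeping automaton on `w`, generated by the five kinds of moves. -/
inductive Reaches (M : SRFA A Qp Qm) (w : List A) : Qp ⊕ Qm → ℕ → Prop
  | start : M.Reaches w (Sum.inl M.start) 0
  | startT {p : Qp} (h : M.startT = some p) : M.Reaches w (Sum.inl p) 1
  | right {p q : Qp} {i : ℕ} (hi : i < w.length) (hp : M.Reaches w (Sum.inl p) (i + 1))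
      (h : M.nextP w[i] p = some q) : M.Reaches w (Sum.inl q) (i + 2)
  | turnR {p : Qp} {r : Qm} (hp : M.Reaches w (Sum.inl p) (w.length + 1))
      (h : M.turnR p = some r) : M.Reaches w (Sum.inr r) w.length
  | left {r s : Qm} {i : ℕ} (hi : i < w.length) (hr : M.Reaches w (Sum.inr r) (i + 1))
      (h : M.nextM w[i] r = some s) : M.Reaches w (Sum.inr s) i
  | turnL {r : Qm} {p : Qp} (hr : M.Reaches w (Sum.inr r) 0)
      (h : M.turnL r = some p) : M.Reaches w (Sum.inl p) 1

theorem Reaches.of_step {M : SRFA A Qp Qm} {w : List A} {c c' : (Qp ⊕ Qm) × ℕ}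
    (hc : M.Reaches w c.1 c.2) (h : M.step w c = some c') : M.Reaches w c'.1 c'.2 := by
  obtain ⟨q | r, _ | i⟩ := c
  · simp only [step, if_true, Option.ite_none_right_eq_some, Option.map_eq_some_iff] at h
    obtain ⟨rfl, p, hp, rfl⟩ := h
    exact .startT hp
  · simp only [step, Nat.succ_ne_zero, if_false, Nat.add_right_cancel_iff] at h
    split_ifs at h with hi
    · obtain ⟨r, hr, rfl⟩ := Option.map_eq_some_iff.mp h
      exact .turnR (hi ▸ hc) hr
    · simp only [Option.map_eq_some_iff, Option.bind_eq_some_iff] at h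
      obtain ⟨p, ⟨a, ha, hp⟩, rfl⟩ := h
      obtain ⟨hi, rfl⟩ := List.getElem?_eq_some_iff.mp ha
      exact .right hi hc hp
  · obtain ⟨p, hp, rfl⟩ := Option.map_eq_some_iff.mp h
    exact .turnL hc hp
  · simp only [step, Nat.succ_ne_zero, if_false, Option.ite_none_left_eq_some,
      Option.map_eq_some_iff, Option.bind_eq_some_iff] at h
    obtain ⟨-, s, ⟨a, ha, hs⟩, rfl⟩ := h
    obtain ⟨hi, rfl⟩ := List.getElem?_eq_some_iff.mp ha
    exact .left hi hc hs

theorem exists_steps_eq_some_iff {M : SRFA A Qp Qm} {w : List A} {c : Qp ⊕ Qm} {i : ℕ} :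
    (∃ n, M.steps w n = some (c, i)) ↔ M.Reaches w c i := by
  constructor
  · rintro ⟨n, hn⟩
    induction n generalizing c i with
    | zero => 
      cases hn
      exact .start
    | succ n ih =>
      obtain ⟨c', hc', h⟩ := Option.bind_eq_some_iff.mp hn
      exact (ih hc').of_step h
  · have extend {c c'} (hc : ∃ n, M.steps w n = some c) (h : M.step w c = some c') :
        ∃ n, M.steps w n = some c' := by
      obtain ⟨n, hn⟩ := hc
      exact ⟨n + 1, by rw [steps, hn, Option.bind_some, h]⟩
    intro h
    induction h with
    | start => exact ⟨0, rfl⟩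
    | startT h => exact extend ⟨0, rfl⟩ (by simp [step, h])
    | right hi _ h ih => exact extend ih (by simp [step, hi, hi.ne, h])
    | turnR _ h ih => exact extend ih (by simp [step, h])
    | left hi _ h ih => exact extend ih (by simp [step, hi, hi.ne, h])
    | turnL _ h ih => exact extend ih (by simp [step, h])

theorem mem_langR_iff {M : SRFA A Qp Qm} {F : Set Qp} {w : List A} :
    w ∈ M.LangR F ↔ ∃ q ∈ F, M.Reaches w (Sum.inl q) (w.length + 1) ∧ M.turnR q = none := by
  simp only [LangR, AcceptsR, ← exists_steps_eq_some_iff, step, Set.mem_ofPred_eq,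
    Nat.succ_ne_zero, if_true, if_false, Option.map_eq_none_iff]
  grind

theorem Reaches.right_of_nextP_eq_some {M : SRFA A Qp Qm} {w : List A} {p : Qp}
    (hp : M.Reaches w (Sum.inl p) 1) (h : ∀ a, M.nextP a p = some p) {i : ℕ}
    (hi : i ≤ w.length) : M.Reaches w (Sum.inl p) (i + 1) := by
  induction i with
  | zero => exact hp
  | succ i ih => exact .right hi (ih (Nat.le_of_succ_le hi)) (h _)

end SRFA

namespace RFA

variable {A Q : Type} (M : RFA A Q)

/-- The state reached by reading a word from right to left. -/
def runRev (w : List A) : Option Q :=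
  runP M.next M.start w.reverse

theorem runRev_nil : M.runRev [] = some M.start :=
  rfl

theorem runRev_cons (a : A) (w : List A) : M.runRev (a :: w) = (M.runRev w).bind (M.next a) := by
  simp [runRev, runP]

/-- The sweeping automaton that scans its input from left to right without looking at it, simulates
a one-way reversible automaton on the way back, and carries accepting states to the right end. -/
noncomputable def reverseSweep : SRFA A (Option Q) Q where
  start := none
  nextP _ := some
  nextM := M.next
  startT := some none
  turnL q := if q ∈ M.accept then some (some q) else none
  turnR
    | none => some M.start
    | some _ => none
  injP := by grind
  injM := M.inj
  injL := by grind
  injR := by grind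
  startT_ne_turnL := by grind

/-- What the simulation of `M` by `M.reverseSweep` guarantees about a configuration reached on `w`:
a left-moving state is the one `M` reaches by reading the suffix already scanned, and a state
carried back to the right is accepting. -/
def SweepInvariant (w : List A) : Option Q ⊕ Q → ℕ → Prop
  | Sum.inl p, _ => ∀ q, p = some q → q ∈ M.accept ∧ M.runRev w = some q
  | Sum.inr q, i => M.runRev (w.drop i) = some q

theorem sweepInvariant_of_reaches {w : List A} {c : Option Q ⊕ Q} {i : ℕ}
    (h : M.reverseSweep.Reaches w c i) : M.SweepInvariant w c i := by
  induction h with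
  | start => simp [SweepInvariant, reverseSweep]
  | startT h =>
    cases h
    simp [SweepInvariant]
  | right _ _ h ih =>
    cases h
    exact ih
  | @turnR p _ _ h =>
    cases p with
    | none => simpa [SweepInvariant, runRev_nil, reverseSweep] using h
    | some _ => cases h
  | left hi _ h ih =>
    rw [SweepInvariant, List.drop_eq_getElem_cons hi, runRev_cons, ih]
    exact h
  | turnL _ h ih =>
    simp only [reverseSweep, Option.ite_none_right_eq_some, Option.some.injEq] at h
    rintro q rfl
    obtain ⟨hacc, h⟩ := h
    cases h
    exact ⟨hacc, ih⟩

theorem reaches_reverseSweep_of_runRev {w : List A} {i : ℕ} (hi : i ≤ w.length) {q : Q}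
    (hq : M.runRev (w.drop i) = some q) : M.reverseSweep.Reaches w (Sum.inr q) i := by
  induction hi using Nat.decreasingInduction generalizing q with
  | self =>
    obtain rfl : M.start = q := by simpa [runRev_nil] using hq
    have hstart : M.reverseSweep.Reaches w (Sum.inl none) 1 := .startT rfl
    exact .turnR (hstart.right_of_nextP_eq_some (fun _ => rfl) le_rfl) rfl
  | of_succ i hi ih =>
    rw [List.drop_eq_getElem_cons hi, runRev_cons, Option.bind_eq_some_iff] at hq
    obtain ⟨p, hp, hq⟩ := hq
    exact .left hi (ih hp) hq

theorem langR_reverseSweep :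
    M.reverseSweep.LangR {q | q ≠ none} = List.reverse ⁻¹' M.Language := by
  ext w
  rw [SRFA.mem_langR_iff]
  constructor
  · rintro ⟨q, hq, hreach, -⟩
    obtain ⟨q, rfl⟩ := Option.ne_none_iff_exists'.mp hq
    exact ⟨q, M.sweepInvariant_of_reaches hreach q rfl⟩
  · rintro ⟨q, hacc, hrun⟩
    have hleft := M.reaches_reverseSweep_of_runRev (Nat.zero_le w.length) hrun
    have hright : M.reverseSweep.Reaches w (Sum.inl (some q)) 1 := .turnL hleft (if_pos hacc)
    exact ⟨some q, Option.some_ne_none q,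
      hright.right_of_nextP_eq_some (fun _ => rfl) le_rfl, rfl⟩

end RFA

theorem Rec1RFA.recSRFA_preimage_reverse {A : Type} {L : Set (List A)} (h : Rec1RFA A L) :
    RecSRFA A (List.reverse ⁻¹' L) := by
  obtain ⟨Q, _, M, rfl⟩ := h
  exact ⟨Option Q, Q, inferInstance, inferInstance, M.reverseSweep, _, M.langR_reverseSweep⟩

/-! ### The languages `L_k` -/

/-- The word `(a bⁱ)ⁿ b aʲ`. -/
def blockWord (n i j : ℕ) : List Bool :=
  (List.replicate n (abWord i)).flatten ++ true :: List.replicate j false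

theorem mem_lstarTail_iff {k : ℕ} {w : List Bool} :
    w ∈ LstarTail k ↔ ∃ i < k, ∃ n, w = blockWord n i i :=
  Iff.rfl

theorem blockWord_zero (i j : ℕ) : blockWord 0 i j = true :: List.replicate j false :=
  rfl

theorem blockWord_succ (n i j : ℕ) :
    blockWord (n + 1) i j = false :: (List.replicate i true ++ blockWord n i j) := by
  simp [blockWord, abWord, List.replicate_succ]

theorem length_takeWhile_reverse_blockWord (n i j : ℕ) :
    ((blockWord n i j).reverse.takeWhile (!·)).length = j := by
  simp [blockWord]

theorem count_false_blockWord (n i j : ℕ) : (blockWord n i j).count false = n + j := by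
  simp [blockWord, abWord, List.count_flatten, List.count_replicate]

theorem count_true_blockWord (n i j : ℕ) : (blockWord n i j).count true = n * i + 1 := by
  simp [blockWord, abWord, List.count_flatten, List.count_replicate]

theorem eq_of_blockWord_mem_lstarTail {k n i j : ℕ} (hn : n ≠ 0)
    (h : blockWord n i j ∈ LstarTail k) : i = j := by
  obtain ⟨m, -, n', h⟩ := mem_lstarTail_iff.mp h
  obtain rfl : j = m := by
    simpa only [length_takeWhile_reverse_blockWord] using
      congrArg (fun w => (w.reverse.takeWhile (!·)).length) h
  obtain rfl : n = n' := by
    simpa only [count_false_blockWord, Nat.add_right_cancel_iff] using congrArg (List.count false) h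
  simpa [count_true_blockWord, hn] using congrArg (List.count true) h

/-- States of `tailRFA`, which reads words of the form `aʲ b (bʲ a)*`: `count j` has read `aʲ`,
and `block j m` has read `aʲ b` followed by complete blocks `bʲ a` and then `bᵐ`. -/
inductive TailState (k : ℕ)
  | count (j : Fin k)
  | block (j m : Fin k)

namespace TailState

instance (k : ℕ) : Finite (TailState k) :=
  let toSum : TailState k → Fin k ⊕ Fin k × Fin k
    | count j => Sum.inl j
    | block j m => Sum.inr (j, m)
  Finite.of_injective toSum (by rintro (j | ⟨j, m⟩) (j' | ⟨j', m'⟩) h <;> simp_all [toSum])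

variable {k : ℕ} [NeZero k]

/-- Transitions of `tailRFA`. -/
def next : Bool → TailState k → Option (TailState k)
  | false, count j => if h : j.1 + 1 < k then some (count ⟨j + 1, h⟩) else none
  | true, count j => some (block j 0)
  | false, block j m => if m = j then some (block j 0) else none
  | true, block j m => if h : m.1 < j.1 then some (block j ⟨m + 1, by omega⟩) else none

theorem next_injective (a : Bool) (q q' r : TailState k)
    (h : next a q = some r) (h' : next a q' = some r) : q = q' := by
  rcases q with j | ⟨j, m⟩ <;> rcases q' with j' | ⟨j', m'⟩ <;> cases a <;>
    simp only [next] at h h' <;> grind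

/-- `q.Reads w` says that `w` is one of the words that, read from right to left, should lead
`tailRFA` to the state `q`. -/
def Reads (w : List Bool) : TailState k → Prop
  | count j => w = List.replicate j false
  | block j m => ∃ n, w = List.replicate m true ++ blockWord n j j

theorem Reads.cons {a : Bool} {w : List Bool} {q r : TailState k} (hw : q.Reads w)
    (h : next a q = some r) : r.Reads (a :: w) := by
  rcases q with j | ⟨j, m⟩ <;> cases a <;>
    simp only [next, Option.dite_none_right_eq_some, Option.ite_none_right_eq_some,
      Option.some.injEq] at h
  · obtain ⟨hj, rfl⟩ := h
    rw [Reads] at hw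
    rw [Reads, List.replicate_succ, hw]
  · subst h
    rw [Reads] at hw
    exact ⟨0, by simp [blockWord_zero, hw]⟩
  · obtain ⟨rfl, rfl⟩ := h
    obtain ⟨n, rfl⟩ := hw
    exact ⟨n + 1, by simp [blockWord_succ]⟩
  · obtain ⟨hm, rfl⟩ := h
    obtain ⟨n, rfl⟩ := hw
    exact ⟨n, by simp [List.replicate_succ]⟩

end TailState

/-- A one-way reversible automaton for `⋃ aʲ b (bʲ a)*`, the reversal of `LstarTail k`. -/
def tailRFA (k : ℕ) [NeZero k] : RFA Bool (TailState k) where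
  start := .count 0
  next := TailState.next
  inj := TailState.next_injective
  accept := {q | ∃ j, q = .block j 0}

namespace tailRFA

open TailState

variable {k : ℕ} [NeZero k]

theorem reads_of_runRev {w : List Bool} {q : TailState k}
    (h : (tailRFA k).runRev w = some q) : q.Reads w := by
  induction w generalizing q with
  | nil =>
    obtain rfl : count 0 = q := Option.some.inj h
    simp [Reads]
  | cons a w ih =>
    rw [RFA.runRev_cons, Option.bind_eq_some_iff] at h
    obtain ⟨p, hp, h⟩ := h
    exact (ih hp).cons h

theorem runRev_replicate_false {j : ℕ} (hj : j < k) :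
    (tailRFA k).runRev (List.replicate j false) = some (count ⟨j, hj⟩) := by
  induction j with
  | zero => rfl
  | succ j ih =>
    rw [List.replicate_succ, RFA.runRev_cons, ih (Nat.lt_of_succ_lt hj)]
    simp [tailRFA, next, hj]

theorem runRev_replicate_true_append {j : Fin k} {w : List Bool}
    (hw : (tailRFA k).runRev w = some (block j 0)) {m : ℕ} (hm : m ≤ j) :
    (tailRFA k).runRev (List.replicate m true ++ w) = some (block j ⟨m, by omega⟩) := by
  induction m with
  | zero => exact hw
  | succ m ih =>
    rw [List.replicate_succ, List.cons_append, RFA.runRev_cons, ih (Nat.le_of_succ_le hm)]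
    simp [tailRFA, next, Nat.lt_of_succ_le hm]

theorem runRev_blockWord (n : ℕ) (j : Fin k) :
    (tailRFA k).runRev (blockWord n j j) = some (block j 0) := by
  induction n with
  | zero =>
    rw [blockWord_zero, RFA.runRev_cons, runRev_replicate_false j.2]
    rfl
  | succ n ih =>
    rw [blockWord_succ, RFA.runRev_cons, runRev_replicate_true_append ih le_rfl]
    simp [tailRFA, next]

theorem preimage_reverse_language : List.reverse ⁻¹' (tailRFA k).Language = LstarTail k := by
  ext w
  rw [mem_lstarTail_iff]
  constructor
  · rintro ⟨_, ⟨j, rfl⟩, h⟩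
    obtain ⟨n, hn⟩ := reads_of_runRev h
    exact ⟨j, j.2, n, hn⟩
  · rintro ⟨i, hi, n, rfl⟩
    exact ⟨_, ⟨⟨i, hi⟩, rfl⟩, runRev_blockWord n ⟨i, hi⟩⟩

end tailRFA

theorem recSRFA_lstarTail (k : ℕ) [NeZero k] : RecSRFA Bool (LstarTail k) := by
  rw [← tailRFA.preimage_reverse_language]
  exact Rec1RFA.recSRFA_preimage_reverse ⟨_, Fintype.ofFinite _, _, rfl⟩

theorem le_ncard_init_of_language_eq_lstarTail {k : ℕ} {Q : Type} [Finite Q] (M : MRFA Bool Q)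
    (hM : M.Language = LstarTail k) : k ≤ M.init.ncard := by
  rw [← Nat.card_fin k]
  refine M.natCard_le_ncard_init (fun i : Fin k => abWord i)
    (fun i => true :: List.replicate i false) (fun i n => ?_) (fun i j n hn h => ?_)
  · exact hM ▸ ⟨i, i.2, n, rfl⟩
  · exact Fin.ext (eq_of_blockWord_mem_lstarTail hn (hM ▸ h))

/-- for `k ≥ 2`, the language `⋃_{i=0}^{k-1} (a bⁱ)* b aⁱ` is
recognized by some sRFA, but by no MRFA with fewer than `k` initial states. -/
theorem stmt17 (k : ℕ) (hk : 2 ≤ k) :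
    RecSRFA Bool (LstarTail k) ∧
    ∀ (Q : Type) [Fintype Q] (M : MRFA Bool Q),
      M.init.ncard < k → M.Language ≠ LstarTail k := by
  have : NeZero k := ⟨by omega⟩
  exact ⟨recSRFA_lstarTail k,
    fun Q _ M hlt hM => hlt.not_ge (le_ncard_init_of_language_eq_lstarTail M hM)⟩
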